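/- (Theorem 1) Let C ⊆ ℝⁿ be a nonempty symmetric set, let f₁, …, f_m : ℝⁿ → ℝ be linear functionals, let v₁, …, v_m be nonzero variances, and define Pᵢ(d) = gaussianReal (fᵢ d) vᵢ ({x : |x| > 1}) (a value in [0,∞]). Suppose for each i there is dᵢ* ∈ C with fᵢ d ≤ fᵢ dᵢ* for all d ∈ C. Then the value max_i Pᵢ(dᵢ*) is the greatest element of the set { max_i Pᵢ(d) : d ∈ C }; that is, the worst-case exceedance probability over C is attained by separately maximizing each mean fᵢ over C and then taking the largest resulting probability. -/

import Mathlib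

/-!
For a fixed variance, the mass that a Gaussian with mean `t` gives to `{x | 1 < |x|}` is even in
`t` (reflect `x ↦ -x`) and nondecreasing on `t ≥ 0`. The monotonicity holds because moving the mean
from `a` to `b` changes the mass of `[-1, 1]` by the integral over `[-b, -a]` of
`p (x - 1) - p (x + 1)`, where `p` is the centred density, which is even and decreasing in `|x|`.

On a symmetric set, maximizing `fᵢ` is the same as maximizing `|fᵢ|`, so each `Pᵢ` is maximized over
`C` at `dᵢ*`. The maximum of the `Pᵢ(dᵢ*)` is attained at some index `j`, and at the single point
`dⱼ*` the value `maxᵢ Pᵢ(dⱼ*)` is then squeezed to equal it.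
-/

open ProbabilityTheory
open scoped NNReal ENNReal

/-- The centred Gaussian density decreases with the distance to the mean. -/
lemma gaussianPDFReal_zero_le_of_sq_le (v : ℝ≥0) {x y : ℝ} (h : x ^ 2 ≤ y ^ 2) :
    gaussianPDFReal 0 v y ≤ gaussianPDFReal 0 v x := by
  simp only [gaussianPDFReal, sub_zero]
  gcongr

lemma continuous_gaussianPDFReal (μ : ℝ) (v : ℝ≥0) : Continuous (gaussianPDFReal μ v) := by
  rw [gaussianPDFReal_def]
  fun_prop

lemma gaussianReal_Icc_eq {v : ℝ≥0} (hv : v ≠ 0) (t : ℝ) :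
    gaussianReal t v (Set.Icc (-1) 1) =
      ENNReal.ofReal (∫ x in (-1 - t)..(1 - t), gaussianPDFReal 0 v x) := by
  rw [gaussianReal_apply_eq_integral t hv, MeasureTheory.integral_Icc_eq_integral_Ioc,
    ← intervalIntegral.integral_of_le (by norm_num), ← intervalIntegral.integral_comp_sub_right]
  simp only [gaussianPDFReal_sub, zero_add]

/-- One-dimensional Anderson inequality: moving the mean away from `0` lowers the mass of
`[-1, 1]`. -/
lemma gaussianReal_Icc_anti {v : ℝ≥0} (hv : v ≠ 0) {a b : ℝ} (ha : 0 ≤ a) (hab : a ≤ b) :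
    gaussianReal b v (Set.Icc (-1) 1) ≤ gaussianReal a v (Set.Icc (-1) 1) := by
  rw [gaussianReal_Icc_eq hv, gaussianReal_Icc_eq hv]
  apply ENNReal.ofReal_le_ofReal
  have hc := continuous_gaussianPDFReal 0 v
  have hi : ∀ s t : ℝ, IntervalIntegrable (gaussianPDFReal 0 v) MeasureTheory.volume s t :=
    fun s t => hc.intervalIntegrable s t
  have key : (∫ x in (-b)..(-a), gaussianPDFReal 0 v (x - 1)) ≤
      ∫ x in (-b)..(-a), gaussianPDFReal 0 v (x + 1) := by
    apply intervalIntegral.integral_mono_on (by linarith)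
    · exact (hc.comp (continuous_id.sub continuous_const)).intervalIntegrable _ _
    · exact (hc.comp (continuous_id.add continuous_const)).intervalIntegrable _ _
    · intro x hx
      apply gaussianPDFReal_zero_le_of_sq_le
      nlinarith [hx.2]
  rw [intervalIntegral.integral_comp_sub_right (gaussianPDFReal 0 v),
    intervalIntegral.integral_comp_add_right (gaussianPDFReal 0 v)] at key
  have e1 : -b - 1 = -1 - b := by ring
  have e2 : -a - 1 = -1 - a := by ring
  have e3 : -b + 1 = 1 - b := by ring
  have e4 : -a + 1 = 1 - a := by ring
  rw [e1, e2, e3, e4] at key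
  have h1 := intervalIntegral.integral_add_adjacent_intervals
    (hi (-1 - b) (-1 - a)) (hi (-1 - a) (1 - a))
  have h2 := intervalIntegral.integral_add_adjacent_intervals
    (hi (-1 - b) (1 - b)) (hi (1 - b) (1 - a))
  linarith

lemma gaussianReal_exceed_neg (v : ℝ≥0) (t : ℝ) :
    gaussianReal (-t) v {x : ℝ | 1 < |x|} = gaussianReal t v {x : ℝ | 1 < |x|} := by
  rw [← gaussianReal_map_neg, MeasureTheory.Measure.map_apply measurable_neg
    (measurableSet_lt measurable_const continuous_abs.measurable)]
  simp

lemma gaussianReal_exceed_abs (v : ℝ≥0) (t : ℝ) :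
    gaussianReal |t| v {x : ℝ | 1 < |x|} = gaussianReal t v {x : ℝ | 1 < |x|} := by
  rcases abs_choice t with h | h <;> rw [h]
  exact gaussianReal_exceed_neg v t

/-- The exceedance probability depends monotonically on the absolute value of the mean. -/
lemma gaussianReal_exceed_mono {v : ℝ≥0} (hv : v ≠ 0) {a b : ℝ} (hab : |a| ≤ b) :
    gaussianReal a v {x : ℝ | 1 < |x|} ≤ gaussianReal b v {x : ℝ | 1 < |x|} := by
  rw [← gaussianReal_exceed_abs v a]
  have hs : {x : ℝ | 1 < |x|} = (Set.Icc (-1) 1)ᶜ := by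
    ext x
    rw [Set.mem_compl_iff, Set.mem_Icc, ← abs_le, not_le, Set.mem_ofPred_eq]
  rw [hs, MeasureTheory.prob_compl_eq_one_sub measurableSet_Icc,
    MeasureTheory.prob_compl_eq_one_sub measurableSet_Icc]
  exact tsub_le_tsub_left (gaussianReal_Icc_anti hv (abs_nonneg a) hab) 1

/-- Theorem 1: over a nonempty symmetric set `C`, the worst-case exceedance probability
`max_i Pᵢ(d)` is attained by separately maximizing each mean `fᵢ` over `C` and then taking
the largest resulting probability: `max_i Pᵢ(dᵢ*)` is the greatest element of
`{ max_i Pᵢ(d) : d ∈ C }`. -/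
theorem theorem1_impact_estimation {n m : ℕ} (C : Set (Fin n → ℝ))
    (hne : C.Nonempty) (hsym : ∀ d ∈ C, -d ∈ C)
    (f : Fin m → (Fin n → ℝ) →ₗ[ℝ] ℝ) (v : Fin m → ℝ≥0) (hv : ∀ i, v i ≠ 0)
    (P : Fin m → (Fin n → ℝ) → ℝ≥0∞)
    (hP : ∀ i d, P i d = gaussianReal (f i d) (v i) {x : ℝ | 1 < |x|})
    (dstar : Fin m → (Fin n → ℝ)) (hdstar : ∀ i, dstar i ∈ C)
    (hmax : ∀ i, ∀ d ∈ C, f i d ≤ f i (dstar i)) :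
    IsGreatest ((fun d => ⨆ i, P i d) '' C) (⨆ i, P i (dstar i)) := by
  have hP_le : ∀ i, ∀ d ∈ C, P i d ≤ P i (dstar i) := by
    intro i d hd
    rw [hP, hP]
    refine gaussianReal_exceed_mono (hv i) (abs_le'.2 ⟨hmax i d hd, ?_⟩)
    simpa using hmax i (-d) (hsym d hd)
  refine ⟨?_, ?_⟩
  · rcases isEmpty_or_nonempty (Fin m) with hm | hm
    -- For `m = 0` both suprema are over the empty family, and any point of `C` works.
    · obtain ⟨d, hd⟩ := hne
      exact ⟨d, hd, by simp⟩
    · obtain ⟨j, hj⟩ := exists_eq_ciSup_of_finite (f := fun i => P i (dstar i))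
      refine ⟨dstar j, hdstar j, le_antisymm ?_ ?_⟩
      · exact iSup_mono fun i => hP_le i _ (hdstar j)
      · rw [← hj]
        exact le_iSup (fun i => P i (dstar j)) j
  · rintro _ ⟨d, hd, rfl⟩
    exact iSup_mono fun i => hP_le i d hd
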